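/- Let F be a finite field with q elements, let n be odd with n ∣ (q − 1), and let r be any integer with 0 < r < n. Then there exists a linear code C ⊆ F^n with dim C = r, minimum distance n − r + 1, and C ∩ C^⊥ = {0}; that is, an LCD MDS (n, r, n−r+1) code exists over F. -/

import Mathlib

/-- Hamming weight of a vector: the number of nonzero coordinates. -/
noncomputable def hWeight {F : Type*} [Field F] {n : ℕ} (v : Fin n → F) : ℕ :=
  open scoped Classical in
  (Finset.univ.filter fun m => v m ≠ 0).card

/-- The dual code of `C` with respect to the standard bilinear form. -/
def dualCode {F : Type*} [Field F] {n : ℕ} (C : Submodule F (Fin n → F)) :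
    Submodule F (Fin n → F) where
  carrier := {v | ∀ u ∈ C, ∑ m, u m * v m = 0}
  add_mem' := by
    intro a b ha hb u hu
    have h : ∑ m, u m * (a + b) m = (∑ m, u m * a m) + ∑ m, u m * b m := by
      rw [← Finset.sum_add_distrib]
      exact Finset.sum_congr rfl fun m _ => by simp [mul_add]
    rw [h, ha u hu, hb u hu, add_zero]
  zero_mem' := by intro u hu; simp
  smul_mem' := by
    intro c a ha u hu
    have h : ∑ m, u m * (c • a) m = c * ∑ m, u m * a m := by
      rw [Finset.mul_sum]
      exact Finset.sum_congr rfl fun m _ => by simp [smul_eq_mul]; ring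
    rw [h, ha u hu, mul_zero]

/-- Minimum distance of a code: the least Hamming weight of a nonzero codeword. -/
noncomputable def minDist {F : Type*} [Field F] {n : ℕ} (C : Submodule F (Fin n → F)) : ℕ :=
  sInf {d | ∃ v ∈ C, v ≠ 0 ∧ hWeight v = d}

/-!
The code is `{(ζ ^ (a * m) * f (ζ ^ m))_m : deg f < r}` for a primitive `n`-th root of unity `ζ`: a
generalized Reed–Solomon code, hence MDS by root counting and the Singleton bound. It is spanned by
the vectors `e_i = (ζ ^ (i * m))_m` with `a ≤ i < a + r`, and `⟨e_i, e_j⟩` is `n ≠ 0` when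
`n ∣ i + j` and `0` otherwise. If `2 * a + r ≡ 1 [MOD n]`, then `i ↦ 2 * a + r - 1 - i` is negation
modulo `n` and preserves this range of exponents, so the form restricted to the code is
nondegenerate. Such an `a` exists as soon as `n` or `r` is odd.
-/

open Polynomial

section MinimumDistance

variable {F : Type*} [Field F] {n : ℕ}

theorem hWeight_add_card_zeros [DecidableEq F] (v : Fin n → F) :
    hWeight v + (Finset.univ.filter fun m => v m = 0).card = n := by
  have hcount := Finset.card_filter_add_card_filter_not (s := Finset.univ) fun m => v m = 0
  rw [Finset.card_univ, Fintype.card_fin, add_comm] at hcount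
  convert hcount
  unfold hWeight
  congr

theorem hWeight_add_card_le {v : Fin n → F} {s : Finset (Fin n)} (hs : ∀ m ∈ s, v m = 0) :
    hWeight v + s.card ≤ n := by
  classical
  calc hWeight v + s.card
      ≤ hWeight v + (Finset.univ.filter fun m => v m = 0).card := by
        gcongr
        exact fun m hm => Finset.mem_filter.2 ⟨Finset.mem_univ m, hs m hm⟩
    _ = n := hWeight_add_card_zeros v

theorem minDist_le_hWeight {C : Submodule F (Fin n → F)} {v : Fin n → F} (hvC : v ∈ C)
    (hv : v ≠ 0) : minDist C ≤ hWeight v :=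
  Nat.sInf_le ⟨v, hvC, hv, rfl⟩

theorem le_minDist {C : Submodule F (Fin n → F)} (hC : C ≠ ⊥) {d : ℕ}
    (hd : ∀ v ∈ C, v ≠ 0 → d ≤ hWeight v) : d ≤ minDist C := by
  obtain ⟨u, huC, hu⟩ := C.ne_bot_iff.1 hC
  refine le_csInf ⟨hWeight u, u, huC, hu, rfl⟩ ?_
  rintro _ ⟨v, hvC, hv, rfl⟩
  exact hd v hvC hv

theorem exists_ne_zero_forall_mem_eq_zero {C : Submodule F (Fin n → F)} {s : Finset (Fin n)}
    (hs : s.card < Module.finrank F C) : ∃ v ∈ C, v ≠ 0 ∧ ∀ m ∈ s, v m = 0 := by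
  let restriction : C →ₗ[F] (s → F) := LinearMap.funLeft F F Subtype.val ∘ₗ C.subtype
  have hker : LinearMap.ker restriction ≠ ⊥ := by
    apply LinearMap.ker_ne_bot_of_finrank_lt
    rwa [Module.finrank_fintype_fun_eq_card, Fintype.card_coe]
  obtain ⟨v, hvker, hv⟩ := (LinearMap.ker restriction).ne_bot_iff.1 hker
  exact ⟨v, v.2, by simpa using hv, fun m hm => congrFun (LinearMap.mem_ker.1 hvker) ⟨m, hm⟩⟩

theorem minDist_add_finrank_le_add_one {C : Submodule F (Fin n → F)} (hC : C ≠ ⊥) :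
    minDist C + Module.finrank F C ≤ n + 1 := by
  have hpos : 0 < Module.finrank F C := Nat.pos_of_ne_zero (mt Submodule.finrank_eq_zero.1 hC)
  have hle : Module.finrank F C ≤ n := by simpa using C.finrank_le
  obtain ⟨s, -, hs⟩ := Finset.exists_subset_card_eq (s := (Finset.univ : Finset (Fin n)))
    (n := Module.finrank F C - 1) (by simp only [Finset.card_univ, Fintype.card_fin]; lia)
  obtain ⟨v, hvC, hv, hvs⟩ := exists_ne_zero_forall_mem_eq_zero (C := C) (s := s) (by lia)
  have hmin := minDist_le_hWeight hvC hv
  have hweight := hWeight_add_card_le hvs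
  lia

end MinimumDistance

section ReedSolomon

variable {F : Type*} [Field F] {n r : ℕ} (α v : Fin n → F)

/-- The encoding map of generalized Reed–Solomon codes with evaluation points `α` and column
multipliers `v`, on polynomials of arbitrary degree. -/
noncomputable def grsEncode : F[X] →ₗ[F] (Fin n → F) :=
  LinearMap.pi fun m => v m • leval (α m)

/-- The generalized Reed–Solomon code of polynomials of degree less than `r`. The usual conditions,
`α` injective and `v` nowhere zero, are left to the lemmas that need them. -/
noncomputable def grsCode (r : ℕ) : Submodule F (Fin n → F) :=
  (degreeLT F r).map (grsEncode α v)

@[simp]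
theorem grsEncode_apply (f : F[X]) (m : Fin n) : grsEncode α v f m = v m * f.eval (α m) :=
  rfl

variable {α v}

theorem le_hWeight_grsEncode_add_natDegree (hα : Function.Injective α) (hv : ∀ m, v m ≠ 0)
    {f : F[X]} (hf : f ≠ 0) : n ≤ hWeight (grsEncode α v f) + f.natDegree := by
  classical
  set zeros := Finset.univ.filter fun m => grsEncode α v f m = 0
  have hroots : (zeros.image α).val ⊆ f.roots := by
    intro x hx
    rw [Finset.mem_val, Finset.mem_image] at hx
    obtain ⟨m, hm, rfl⟩ := hx
    simpa [zeros, hf, hv m] using hm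
  calc n = hWeight (grsEncode α v f) + zeros.card := (hWeight_add_card_zeros _).symm
    _ = hWeight (grsEncode α v f) + (zeros.image α).card := by
        rw [Finset.card_image_of_injective _ hα]
    _ ≤ hWeight (grsEncode α v f) + f.natDegree := by
        gcongr
        exact card_le_degree_of_subset_roots hroots

theorem lt_hWeight_grsEncode_add (hα : Function.Injective α) (hv : ∀ m, v m ≠ 0) {f : F[X]}
    (hf : f ≠ 0) (hfr : f ∈ degreeLT F r) : n < hWeight (grsEncode α v f) + r := by
  have hdeg : f.natDegree < r := (natDegree_lt_iff_degree_lt hf).2 (mem_degreeLT.1 hfr)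
  have hweight := le_hWeight_grsEncode_add_natDegree hα hv hf
  lia

theorem injective_grsEncode_domRestrict (hα : Function.Injective α) (hv : ∀ m, v m ≠ 0)
    (hrn : r ≤ n) : Function.Injective ((grsEncode α v).domRestrict (degreeLT F r)) := by
  refine (injective_iff_map_eq_zero _).2 fun f hf => ?_
  by_contra hf0
  have hweight := lt_hWeight_grsEncode_add hα hv (Submodule.coe_eq_zero.not.2 hf0) f.2
  have hzero : hWeight (grsEncode α v (f : F[X])) = 0 := by
    rw [show grsEncode α v (f : F[X]) = 0 from hf]
    simp [hWeight]
  lia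

theorem finrank_grsCode (hα : Function.Injective α) (hv : ∀ m, v m ≠ 0) (hrn : r ≤ n) :
    Module.finrank F (grsCode α v r) = r := by
  rw [grsCode, ← LinearMap.range_domRestrict,
    LinearMap.finrank_range_of_inj (injective_grsEncode_domRestrict hα hv hrn),
    Module.finrank_eq_card_basis (degreeLT.basis F r), Fintype.card_fin]

theorem minDist_grsCode (hα : Function.Injective α) (hv : ∀ m, v m ≠ 0) (hr0 : 0 < r)
    (hrn : r ≤ n) : minDist (grsCode α v r) = n - r + 1 := by
  have hrank := finrank_grsCode hα hv hrn
  have hC : grsCode α v r ≠ ⊥ := mt Submodule.finrank_eq_zero.2 (by lia)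
  apply le_antisymm
  · have hbound := minDist_add_finrank_le_add_one hC
    lia
  · refine le_minDist hC ?_
    rintro _ ⟨f, hf, rfl⟩ hcodeword
    have hweight := lt_hWeight_grsEncode_add hα hv (f := f) (by rintro rfl; simp at hcodeword) hf
    lia

end ReedSolomon

section RootsOfUnity

/-- The evaluation points `1, ζ, …, ζ ^ (n - 1)` of the codes below; the column multipliers are
their pointwise powers `rootPowers ζ n ^ a`. -/
def rootPowers {M : Type*} [Monoid M] (ζ : M) (n : ℕ) : Fin n → M :=
  fun m => ζ ^ (m : ℕ)

theorem injective_rootPowers {M : Type*} [CommMonoid M] {ζ : M} {n : ℕ}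
    (hζ : IsPrimitiveRoot ζ n) : Function.Injective (rootPowers ζ n) :=
  fun i j hij => Fin.ext (hζ.pow_inj i.2 j.2 hij)

theorem rootPowers_ne_zero {M₀ : Type*} [CommMonoidWithZero M₀] [Nontrivial M₀] [NoZeroDivisors M₀]
    {ζ : M₀} {n : ℕ} (hζ : IsPrimitiveRoot ζ n) (m : Fin n) : rootPowers ζ n m ≠ 0 :=
  pow_ne_zero _ (hζ.ne_zero m.pos.ne')

theorem sum_rootPowers_pow {R : Type*} [CommRing R] [IsDomain R] {ζ : R} {n : ℕ}
    (hζ : IsPrimitiveRoot ζ n) (e : ℕ) :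
    ∑ m, rootPowers ζ n m ^ e = if n ∣ e then (n : R) else 0 := by
  simp_rw [rootPowers, pow_right_comm ζ _ e]
  split_ifs with he
  · simp [(hζ.pow_eq_one_iff_dvd e).2 he]
  · have hne : ζ ^ e - 1 ≠ 0 := sub_ne_zero.2 (mt (hζ.pow_eq_one_iff_dvd e).1 he)
    rw [Fin.sum_univ_eq_sum_range (fun m => (ζ ^ e) ^ m)]
    refine (mul_eq_zero.1 ?_).resolve_right hne
    rw [geom_sum_mul, pow_right_comm, hζ.pow_eq_one, one_pow, sub_self]

/-- This inverts the discrete Fourier transform `f ↦ (f (ζ ^ m))_m`. -/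
theorem sum_rootPowers_pow_mul_eval {R : Type*} [CommRing R] [IsDomain R] {ζ : R}
    {n : ℕ} (hζ : IsPrimitiveRoot ζ n) {f : R[X]} (hf : f ∈ degreeLT R n) {b j : ℕ} (hj : j < n)
    (hbj : n ∣ b + j) :
    ∑ m, rootPowers ζ n m ^ b * f.eval (rootPowers ζ n m) = n * f.coeff j := by
  have hdvd_iff (i : Fin n) : n ∣ b + i ↔ i = ⟨j, hj⟩ := by
    refine ⟨fun hbi => Fin.ext ?_, by rintro rfl; exact hbj⟩
    have hmod : b + i ≡ b + j [MOD n] :=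
      (Nat.modEq_zero_iff_dvd.2 hbi).trans (Nat.modEq_zero_iff_dvd.2 hbj).symm
    exact (hmod.add_left_cancel' b).eq_of_lt_of_lt i.2 hj
  calc ∑ m, rootPowers ζ n m ^ b * f.eval (rootPowers ζ n m)
      = ∑ m, ∑ i : Fin n, f.coeff i * rootPowers ζ n m ^ (b + i) := by
        refine Finset.sum_congr rfl fun m _ => ?_
        rw [eval_eq_sum_degreeLTEquiv hf, Finset.mul_sum]
        refine Finset.sum_congr rfl fun i _ => ?_
        rw [pow_add, mul_left_comm]
        rfl
    _ = ∑ i : Fin n, f.coeff i * ∑ m, rootPowers ζ n m ^ (b + i) := by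
        rw [Finset.sum_comm]
        simp_rw [Finset.mul_sum]
    _ = n * f.coeff j := by
        simp [sum_rootPowers_pow hζ, hdvd_iff, mul_comm]

theorem exists_isPrimitiveRoot_of_dvd_card_sub_one {F : Type*} [Field F] [Fintype F] {n : ℕ}
    (hdvd : n ∣ Fintype.card F - 1) : ∃ ζ : F, IsPrimitiveRoot ζ n := by
  classical
  obtain ⟨k, hk⟩ := hdvd
  obtain ⟨g, hg⟩ := IsCyclic.exists_ofOrder_eq_natCard (α := Fˣ)
  rw [Nat.card_eq_fintype_card, Fintype.card_units, hk, mul_comm] at hg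
  have hpow : IsPrimitiveRoot (g ^ k) n := (IsPrimitiveRoot.orderOf g).pow (orderOf_pos g) hg
  exact ⟨(g ^ k : Fˣ), IsPrimitiveRoot.coe_units_iff.2 hpow⟩

end RootsOfUnity

theorem exists_two_mul_add_modEq_one {n r : ℕ} (hn : 0 < n) (hodd : Odd n ∨ Odd r) :
    ∃ a, 2 * a + r ≡ 1 [MOD n] := by
  rcases Nat.even_or_odd' r with ⟨s, rfl | rfl⟩
  · obtain ⟨t, rfl⟩ : Odd n := hodd.resolve_right (by simp)
    refine ⟨t + 1 + s * (2 * t), Nat.modEq_iff_dvd.2 ⟨-(1 + 2 * s), ?_⟩⟩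
    push_cast
    ring
  · obtain ⟨k, rfl⟩ := Nat.exists_eq_add_of_lt hn
    refine ⟨s * k, Nat.modEq_iff_dvd.2 ⟨-(2 * s), ?_⟩⟩
    push_cast
    ring

section LCD

variable {F : Type*} [Field F] {ζ : F} {n r a : ℕ}

theorem sum_grsEncode_X_pow_mul_grsEncode (hζ : IsPrimitiveRoot ζ n) (hrn : r ≤ n)
    (ha : 2 * a + r ≡ 1 [MOD n]) {f : F[X]} (hf : f ∈ degreeLT F r) {j : ℕ} (hj : j < r) :
    ∑ m, grsEncode (rootPowers ζ n) (rootPowers ζ n ^ a) (X ^ (r - 1 - j)) m *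
      grsEncode (rootPowers ζ n) (rootPowers ζ n ^ a) f m = n * f.coeff j := by
  have hdvd : n ∣ 2 * a + (r - 1 - j) + j := by
    apply Nat.modEq_zero_iff_dvd.1
    apply Nat.ModEq.add_right_cancel' 1
    convert ha using 1
    lia
  rw [← sum_rootPowers_pow_mul_eval hζ (degreeLT_mono hrn hf) (hj.trans_le hrn) hdvd]
  refine Finset.sum_congr rfl fun m _ => ?_
  simp only [grsEncode_apply, Pi.pow_apply, eval_pow, eval_X]
  ring

theorem grsCode_inf_dualCode_eq_bot (hζ : IsPrimitiveRoot ζ n) (hrn : r ≤ n)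
    (ha : 2 * a + r ≡ 1 [MOD n]) :
    grsCode (rootPowers ζ n) (rootPowers ζ n ^ a) r ⊓
      dualCode (grsCode (rootPowers ζ n) (rootPowers ζ n ^ a) r) = ⊥ := by
  rw [eq_bot_iff]
  rintro _ ⟨⟨f, hf, rfl⟩, hdual⟩
  have hcoeff (j : ℕ) (hj : j < r) : f.coeff j = 0 := by
    have : NeZero n := ⟨by lia⟩
    have hmem : (X ^ (r - 1 - j) : F[X]) ∈ degreeLT F r := by
      rw [mem_degreeLT, degree_X_pow]
      exact_mod_cast (by lia : r - 1 - j < r)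
    have horth := hdual _ (Submodule.mem_map_of_mem hmem)
    rw [sum_grsEncode_X_pow_mul_grsEncode hζ hrn ha hf hj] at horth
    exact (mul_eq_zero.1 horth).resolve_left hζ.neZero'.ne
  have hf0 : f = 0 := by
    ext j
    rcases lt_or_ge j r with hj | hj
    · exact hcoeff j hj
    · exact coeff_eq_zero_of_degree_lt ((mem_degreeLT.1 hf).trans_le (by exact_mod_cast hj))
  simp [hf0]

end LCD

theorem exists_LCD_MDS_code_odd_length_general {F : Type*} [Field F] {n r : ℕ} {ζ : F}
    (hζ : IsPrimitiveRoot ζ n) (hodd : Odd n ∨ Odd r) (hr0 : 0 < r) (hrn : r ≤ n) :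
    ∃ C : Submodule F (Fin n → F),
      Module.finrank F C = r ∧ minDist C = n - r + 1 ∧ C ⊓ dualCode C = ⊥ := by
  obtain ⟨a, ha⟩ := exists_two_mul_add_modEq_one (hr0.trans_le hrn) hodd
  have hinj := injective_rootPowers hζ
  have hne (m : Fin n) : (rootPowers ζ n ^ a) m ≠ 0 := pow_ne_zero a (rootPowers_ne_zero hζ m)
  exact ⟨grsCode (rootPowers ζ n) (rootPowers ζ n ^ a) r,
    finrank_grsCode hinj hne hrn, minDist_grsCode hinj hne hr0 hrn,
    grsCode_inf_dualCode_eq_bot hζ hrn ha⟩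

/-- Over a finite field `F` with `q` elements, for `n` odd with
`n ∣ (q − 1)` and any `0 < r < n`, there exists an LCD MDS `(n, r, n−r+1)` code over `F`. -/
theorem exists_LCD_MDS_code_odd_length (F : Type*) [Field F] [Fintype F] (n r : ℕ)
    (hn : Odd n) (hdvd : n ∣ Fintype.card F - 1) (hr0 : 0 < r) (hrn : r < n) :
    ∃ C : Submodule F (Fin n → F),
      Module.finrank F C = r ∧ minDist C = n - r + 1 ∧ C ⊓ dualCode C = ⊥ := by
  obtain ⟨ζ, hζ⟩ := exists_isPrimitiveRoot_of_dvd_card_sub_one hdvd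
  exact exists_LCD_MDS_code_odd_length_general hζ (.inl hn) hr0 hrn.le
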